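/- For every ternary relation φ : ℕ → ℕ → ℕ → Prop and every natural number x, if for every w there exists y < x such that φ y z₀ z₁ holds for all z₀ < w and all z₁ < w, then there exists y < x such that φ y z₀ z₁ holds for all z₀ and all z₁. -/

import Mathlib

open Filter

theorem exists_mem_forall_of_frequently_exists_mem {α ι κ : Type*} {s : Set α} (hs : s.Finite)
    {l : Filter ι} {B : ι → κ → Prop} (hB : ∀ z, ∀ᶠ w in l, B w z) {φ : α → κ → Prop}
    (h : ∃ᶠ w in l, ∃ y ∈ s, ∀ z, B w z → φ y z) :
    ∃ y ∈ s, ∀ z, φ y z := by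
  -- Pigeonhole: one `y` serves frequently many bounds `w`.
  obtain ⟨y, hy, hfreq⟩ := hs.frequently_exists.1 h
  refine ⟨y, hy, fun z ↦ ?_⟩
  obtain ⟨w, hφ, hz⟩ := (hfreq.and_eventually (hB z)).exists
  exact hφ z hz

theorem stmt_1_general {α β : Type*} [Preorder β] [IsDirectedOrder β] [Nonempty β] [NoTopOrder β]
    {s : Set α} (hs : s.Finite) (φ : α → β → β → Prop)
    (h : ∀ w, ∃ y ∈ s, ∀ z₀ < w, ∀ z₁ < w, φ y z₀ z₁) :
    ∃ y ∈ s, ∀ z₀ z₁, φ y z₀ z₁ := by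
  have eventually_bounds (z : β × β) : ∀ᶠ w in atTop, z.1 < w ∧ z.2 < w :=
    (eventually_gt_atTop z.1).and (eventually_gt_atTop z.2)
  have frequently_bounded : ∃ᶠ w in atTop, ∃ y ∈ s, ∀ z : β × β, z.1 < w ∧ z.2 < w → φ y z.1 z.2 :=
    Frequently.of_forall fun w ↦
      let ⟨y, hy, hφ⟩ := h w
      ⟨y, hy, fun z hz ↦ hφ z.1 hz.1 z.2 hz.2⟩
  obtain ⟨y, hy, hφ⟩ :=
    exists_mem_forall_of_frequently_exists_mem hs eventually_bounds frequently_bounded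
  exact ⟨y, hy, fun z₀ z₁ ↦ hφ (z₀, z₁)⟩

theorem stmt_1 (φ : ℕ → ℕ → ℕ → Prop) (x : ℕ)
    (h : ∀ w, ∃ y < x, ∀ z₀ < w, ∀ z₁ < w, φ y z₀ z₁) :
    ∃ y < x, ∀ z₀ z₁, φ y z₀ z₁ :=
  stmt_1_general (Set.finite_Iio x) φ h
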